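/- arXiv:1805.11323 — 3 statements merged into one kernel-verified Lean document; each statement's English description precedes it below -/
import Mathlib

section
/- For all z ∈ ℂ and generic tuples ū (length n), v̄ (length m): (1−z)^{n}·K^{(z)}_{n,m}(ū | v̄) = (1−z)^{m}·Σ_{ū ⇒ {ū_I, ū_II}} (−z)^{#ū_I} f(ū_II, v̄) f(ū_I, ū_II), and (1−z)^{n}·\bar{K}^{(z)}_{n,m}(ū | v̄) = (1−z)^{m}·Σ_{ū ⇒ {ū_I, ū_II}} (−z)^{#ū_I} f(v̄, ū_II) f(ū_II, ū_I), where the sums run over all partitions of ū into two disjoint subtuples. -/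
open scoped BigOperators

noncomputable section

/-- The rational function `g(u,v) = c/(u-v)`. -/
def gC (c u v : ℂ) : ℂ := c / (u - v)

/-- The rational function `f(u,v) = (u-v+c)/(u-v)`. -/
def fC (c u v : ℂ) : ℂ := (u - v + c) / (u - v)

/-- The rational function `h(u,v) = (u-v+c)/c`. -/
def hC (c u v : ℂ) : ℂ := (u - v + c) / c

/-- A family of parameters is generic if all pairwise differences avoid `0, ±c, ±2c`. -/
def Generic (c : ℂ) {ι : Type*} (w : ι → ℂ) : Prop :=
  ∀ i j, i ≠ j → w i - w j ≠ 0 ∧ w i - w j ≠ c ∧ w i - w j ≠ -c ∧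
    w i - w j ≠ 2 * c ∧ w i - w j ≠ -2 * c

/-- The modified Izergin determinant `K^{(z)}(x̄|ȳ)`. -/
def KIz (c z : ℂ) {ι κ : Type*} [Fintype ι] [Fintype κ] [DecidableEq κ]
    (x : ι → ℂ) (y : κ → ℂ) : ℂ :=
  Matrix.det (Matrix.of fun j k : κ =>
    -z * (if j = k then 1 else 0) +
      (∏ i, fC c (x i) (y j)) * (∏ i ∈ Finset.univ.erase j, fC c (y j) (y i))
        / hC c (y j) (y k))

/-- The conjugated modified Izergin determinant: `c` is replaced by `-c`. -/
def KIzBar (c z : ℂ) {ι κ : Type*} [Fintype ι] [Fintype κ] [DecidableEq κ]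
    (x : ι → ℂ) (y : κ → ℂ) : ℂ :=
  KIz (-c) z x y

/-- Restriction of a tuple to a subtuple indexed by a `Finset`. -/
def restr {p : ℕ} (w : Fin p → ℂ) (s : Finset (Fin p)) : {x // x ∈ s} → ℂ :=
  fun i => w i.1

/-- Double product `f(w̄_s, w̄_t)` over two subtuples of a tuple. -/
def fSS (c : ℂ) {p : ℕ} (w : Fin p → ℂ) (s t : Finset (Fin p)) : ℂ :=
  ∏ i ∈ s, ∏ j ∈ t, fC c (w i) (w j)

/- Both sides are rational functions of each single parameter, with simple poles. Expanding the
determinant by its principal minors, which are Cauchy determinants, turns `K` into a sum over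
partitions of `v̄`, namely the sum over partitions of `ū` with `ū`, `v̄` exchanged and `c` replaced
by `-c`. As a function of one `u_a`, the sum over partitions of `ū` has poles only at `v̄`, because
the poles at the other `u_i` cancel between the partitions that differ in the position of `u_i`.
Its partial fraction expansion, with residues given by the same sums for fewer parameters, agrees
with that of the sum over partitions of `v̄` up to the powers of `1 - z`, and the identity follows
by induction on the length of `ū`. -/

section FinsetSums

open Finset

theorem sum_powerset_sum_mem {α M : Type*} [DecidableEq α] [AddCommMonoid M] (U : Finset α)
    (F : Finset α → α → M) :
    ∑ S ∈ U.powerset, ∑ x ∈ S, F S x = ∑ S ∈ U.powerset, ∑ x ∈ U \ S, F (insert x S) x := by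
  rw [sum_sigma', sum_sigma']
  refine sum_bij' (fun p _ => ⟨p.1.erase p.2, p.2⟩) (fun p _ => ⟨insert p.2 p.1, p.2⟩)
    ?_ ?_ ?_ ?_ ?_ <;> rintro ⟨S, x⟩ h <;> simp only [mem_sigma, mem_powerset, mem_sdiff] at h ⊢
  · exact ⟨(erase_subset x S).trans h.1, h.1 h.2, notMem_erase x S⟩
  · exact ⟨insert_subset h.2.1 h.1, mem_insert_self x S⟩
  · rw [insert_erase h.2]
  · rw [erase_insert h.2.2]
  · rw [insert_erase h.2]

theorem sum_powerset_sum_sdiff {α M : Type*} [DecidableEq α] [AddCommMonoid M] (U : Finset α)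
    (F : Finset α → α → M) :
    ∑ S ∈ U.powerset, ∑ x ∈ U \ S, F S x = ∑ x ∈ U, ∑ S ∈ (U.erase x).powerset, F S x :=
  sum_comm' fun S x => by
    simp only [mem_powerset, mem_sdiff, subset_erase]
    tauto

theorem prod_one_add_div_sub {K : Type*} [Field K] [DecidableEq K] (d : K → K) (A : Finset K)
    {x : K} (hx : x ∉ A) :
    ∏ a ∈ A, (1 + d a / (x - a)) =
      1 + ∑ a ∈ A, d a / (x - a) * ∏ b ∈ A.erase a, (1 + d b / (a - b)) := by
  induction A using Finset.induction_on generalizing x with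
  | empty => simp
  | insert b A hb ih =>
    rw [mem_insert, not_or] at hx
    have residue (a : K) (ha : a ∈ A) :
        ∏ e ∈ (insert b A).erase a, (1 + d e / (a - e)) =
          (1 + d b / (a - b)) * ∏ e ∈ A.erase a, (1 + d e / (a - e)) := by
      rw [erase_insert_of_ne (ne_of_mem_of_not_mem ha hb).symm,
        prod_insert fun h => hb (mem_of_mem_erase h)]
    -- `1/((x - b)(x - a)) = (1/(x - b) - 1/(x - a)) / (b - a)`
    have split (a : K) (ha : a ∈ A) (r : K) :
        d b / (x - b) * (d a / (x - a) * r) + d a / (x - a) * r =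
          d b / (x - b) * (d a / (b - a) * r) + d a / (x - a) * ((1 + d b / (a - b)) * r) := by
      have hxb : x - b ≠ 0 := sub_ne_zero.2 hx.1
      have hxa : x - a ≠ 0 := sub_ne_zero.2 (ne_of_mem_of_not_mem ha hx.2).symm
      have hba : b - a ≠ 0 := sub_ne_zero.2 (ne_of_mem_of_not_mem ha hb).symm
      rw [← neg_sub b a]
      field_simp
      ring
    have sum_split := sum_congr (rfl : A = A) fun a ha =>
      split a ha (∏ e ∈ A.erase a, (1 + d e / (a - e)))
    rw [sum_add_distrib, sum_add_distrib, ← mul_sum, ← mul_sum] at sum_split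
    rw [prod_insert hb, sum_insert hb, erase_insert hb, ih hx.2, ih hb,
      sum_congr rfl fun a ha => congrArg _ (residue a ha)]
    linear_combination sum_split

end FinsetSums

section Determinants

open Finset Matrix

theorem det_smul_one_add_eq_sum_minors {ι R : Type*} [DecidableEq ι] [Fintype ι] [CommRing R]
    (a : R) (M : Matrix ι ι R) :
    (a • (1 : Matrix ι ι R) + M).det =
      ∑ T : Finset ι, a ^ #Tᶜ * (M.submatrix (Subtype.val : T → ι) Subtype.val).det := by
  rw [add_comm]
  refine (detRowAlternating.map_add_univ M.row (a • (1 : Matrix ι ι R)).row).trans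
    (sum_congr rfl fun T _ => ?_)
  have rows : T.piecewise M.row (a • (1 : Matrix ι ι R)).row =
      fun i => (if i ∈ T then 1 else a) • T.piecewise M.row (1 : Matrix ι ι R).row i := by
    ext i j
    by_cases hi : i ∈ T <;> simp [piecewise, hi, Matrix.row]
  have weight : ∏ i, (if i ∈ T then 1 else a) = a ^ #Tᶜ := by
    simp [prod_ite, filter_notMem_eq_sdiff, compl_eq_univ_sdiff]
  rw [rows, AlternatingMap.map_smul_univ, weight, ← det_piecewise_one_eq_submatrix_det]
  rfl

variable {ι K : Type*} [Field K]

/-- The Cauchy-type matrix with entries `c / (y_j - y_k + c)`, that is, `1 / h(y_j, y_k)`. -/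
def shiftedCauchy (c : K) (y : ι → K) : Matrix ι ι K :=
  of fun j k => c / (y j - y k + c)

theorem det_shiftedCauchy_option [DecidableEq ι] [Fintype ι] {c : K} (y : Option ι → K)
    (hy : ∀ j k, y j - y k + c ≠ 0) :
    (shiftedCauchy c y).det =
      (∏ j, (y (some j) - y none) / (y (some j) - y none + c)) *
        ((∏ k, (y none - y (some k)) / (y none - y (some k) + c)) *
          (shiftedCauchy c fun j => y (some j)).det) := by
  have hc : c ≠ 0 := by simpa using hy none none
  have blocks : (shiftedCauchy c y).submatrix (Equiv.optionEquivSumPUnit.{0} ι).symm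
      (Equiv.optionEquivSumPUnit.{0} ι).symm =
      fromBlocks (shiftedCauchy c fun j => y (some j))
        (of fun j (_ : PUnit) => c / (y (some j) - y none + c))
        (of fun (_ : PUnit) k => c / (y none - y (some k) + c)) 1 := by
    ext (j | j) (k | k) <;> simp [shiftedCauchy, hc]
  have schur_complement : shiftedCauchy c (fun j => y (some j)) -
      (of fun j (_ : PUnit) => c / (y (some j) - y none + c)) *
        (of fun (_ : PUnit) k => c / (y none - y (some k) + c)) =
      of fun j k => (y (some j) - y none) / (y (some j) - y none + c) *
        of (fun j k => (y none - y (some k)) / (y none - y (some k) + c) *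
          shiftedCauchy c (fun j => y (some j)) j k) j k := by
    ext j k
    have hjk := hy (some j) (some k)
    have hj := hy (some j) none
    have hk := hy none (some k)
    simp only [shiftedCauchy, Matrix.sub_apply, of_apply, mul_apply, univ_unique, sum_singleton]
    field_simp
    ring
  rw [← det_submatrix_equiv_self (Equiv.optionEquivSumPUnit.{0} ι).symm, blocks,
    det_fromBlocks_one₂₂, schur_complement, det_mul_column, det_mul_row]

theorem det_shiftedCauchy [DecidableEq ι] {c : K} (y : ι → K)
    (hy : ∀ j k, y j - y k + c ≠ 0) (T : Finset ι) :
    (shiftedCauchy c fun j : T => y j).det =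
      ∏ j ∈ T, ∏ k ∈ T.erase j, (y j - y k) / (y j - y k + c) := by
  induction T using Finset.induction_on with
  | empty => simp
  | insert a T ha ih =>
    have row (j : ι) (hj : j ∈ T) :
        ∏ k ∈ (insert a T).erase j, (y j - y k) / (y j - y k + c) =
          (y j - y a) / (y j - y a + c) * ∏ k ∈ T.erase j, (y j - y k) / (y j - y k + c) := by
      rw [erase_insert_of_ne (ne_of_mem_of_not_mem hj ha).symm,
        prod_insert fun h => ha (mem_of_mem_erase h)]
    rw [← det_submatrix_equiv_self (subtypeInsertEquivOption ha).symm,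
      show (shiftedCauchy c fun j : ↥(insert a T) => y j).submatrix
        (subtypeInsertEquivOption ha).symm (subtypeInsertEquivOption ha).symm =
        shiftedCauchy c fun j => y ((subtypeInsertEquivOption ha).symm j).1 from rfl,
      det_shiftedCauchy_option _ fun _ _ => hy _ _]
    simp only [subtypeInsertEquivOption, Equiv.coe_fn_symm_mk, Option.elim_some, Option.elim_none,
      ih]
    rw [prod_insert ha, erase_insert ha, prod_congr rfl row, prod_mul_distrib,
      prod_coe_sort T fun j => (y j - y a) / (y j - y a + c),
      prod_coe_sort T fun k => (y a - y k) / (y a - y k + c)]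
    ring

end Determinants

section PartitionSums

open Finset

variable {c z : ℂ} {U V : Finset ℂ}

theorem fC_eq_one_add {x y : ℂ} (h : x ≠ y) : fC c x y = 1 + c / (x - y) := by
  rw [fC, add_div, div_self (sub_ne_zero.2 h)]

theorem fC_neg (c x y : ℂ) : fC (-c) x y = fC c y x := by
  rw [fC, fC, ← neg_div_neg_eq]
  ring_nf

/-- The product `f(X̄, Ȳ)` over two finite sets of parameters. -/
def fProd (c : ℂ) (X Y : Finset ℂ) : ℂ :=
  ∏ x ∈ X, ∏ y ∈ Y, fC c x y

theorem fProd_insert_left {x : ℂ} {X : Finset ℂ} (hx : x ∉ X) (Y : Finset ℂ) :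
    fProd c (insert x X) Y = (∏ y ∈ Y, fC c x y) * fProd c X Y :=
  prod_insert hx

theorem fProd_insert_right {y : ℂ} (X : Finset ℂ) {Y : Finset ℂ} (hy : y ∉ Y) :
    fProd c X (insert y Y) = (∏ x ∈ X, fC c x y) * fProd c X Y := by
  simp only [fProd, prod_insert hy, prod_mul_distrib]

/-- The residue at `x = y`, divided by `c`, of the rational function `x ↦ f(x, V) f(U, x)`, for
`y ∈ V`. The residue at a point of `U` is obtained by exchanging `U` with `V` and `c` with `-c`. -/
def residueFactor (c : ℂ) (U V : Finset ℂ) (y : ℂ) : ℂ :=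
  (∏ y' ∈ V.erase y, fC c y y') * ∏ x ∈ U, fC c x y

theorem prod_fC_mul_prod_fC_eq_one_add_sum (hUV : Disjoint U V) {x : ℂ} (hxU : x ∉ U)
    (hxV : x ∉ V) :
    (∏ y ∈ V, fC c x y) * ∏ y ∈ U, fC c y x =
      1 + ∑ y ∈ V, c / (x - y) * residueFactor c U V y -
        ∑ y ∈ U, c / (x - y) * residueFactor (-c) V U y := by
  let d (b : ℂ) : ℂ := if b ∈ U then -c else c
  have factors {a : ℂ} {P Q : Finset ℂ} (hPU : P ⊆ U) (hQV : Q ⊆ V) (haP : a ∉ P) (haQ : a ∉ Q) :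
      ∏ b ∈ P ∪ Q, (1 + d b / (a - b)) = (∏ b ∈ Q, fC c a b) * ∏ b ∈ P, fC c b a := by
    rw [prod_union (hUV.mono hPU hQV), mul_comm]
    congr 1 <;> refine prod_congr rfl fun b hb => ?_
    · rw [fC_eq_one_add (ne_of_mem_of_not_mem hb haQ).symm]
      simp only [d, disjoint_right.1 hUV (hQV hb), if_false]
    · rw [← fC_neg, fC_eq_one_add (ne_of_mem_of_not_mem hb haP).symm]
      simp only [d, hPU hb, if_true]
  have residue_of_mem_left (y : ℂ) (hy : y ∈ U) :
      d y / (x - y) * ∏ b ∈ (U ∪ V).erase y, (1 + d b / (y - b)) =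
        -(c / (x - y) * residueFactor (-c) V U y) := by
    have hyV := disjoint_left.1 hUV hy
    rw [erase_union_distrib, erase_eq_of_notMem hyV,
      factors (erase_subset y U) subset_rfl (notMem_erase y U) hyV]
    simp only [d, hy, if_true, residueFactor, fC_neg]
    ring
  have residue_of_mem_right (y : ℂ) (hy : y ∈ V) :
      d y / (x - y) * ∏ b ∈ (U ∪ V).erase y, (1 + d b / (y - b)) =
        c / (x - y) * residueFactor c U V y := by
    have hyU := disjoint_right.1 hUV hy
    rw [erase_union_distrib, erase_eq_of_notMem hyU,
      factors subset_rfl (erase_subset y V) hyU (notMem_erase y V)]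
    simp only [d, hyU, if_false, residueFactor]
  rw [← factors subset_rfl subset_rfl hxU hxV, prod_one_add_div_sub d _ (by simp [hxU, hxV]),
    sum_union hUV, sum_congr rfl residue_of_mem_left, sum_congr rfl residue_of_mem_right,
    sum_neg_distrib]
  ring

theorem prod_fC_eq_one_add_sum {x : ℂ} (hx : x ∉ V) :
    ∏ y ∈ V, fC c x y = 1 + ∑ y ∈ V, c / (x - y) * residueFactor c ∅ V y := by
  simpa using
    prod_fC_mul_prod_fC_eq_one_add_sum (c := c) (disjoint_empty_left V) (notMem_empty x) hx

/-- The summand `(-z)^{#S} f(U \ S, V) f(S, U \ S)` of the partition expansion, attached to the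
partition `{S, U \ S}` of `U`. -/
def partitionTerm (c z : ℂ) (U V S : Finset ℂ) : ℂ :=
  (-z) ^ #S * fProd c (U \ S) V * fProd c S (U \ S)

/-- The sum of `(-z)^{#S} f(U \ S, V) f(S, U \ S)` over all partitions `{S, U \ S}` of `U`. The
parameters form sets rather than tuples, so that single points can be added and removed. -/
def partitionSum (c z : ℂ) (U V : Finset ℂ) : ℂ :=
  ∑ S ∈ U.powerset, partitionTerm c z U V S

theorem partitionTerm_insert_of_notMem {a : ℂ} (ha : a ∉ U) {S : Finset ℂ} (hS : S ⊆ U) :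
    partitionTerm c z (insert a U) V S =
      partitionTerm c z U V S * ((∏ y ∈ V, fC c a y) * ∏ y ∈ S, fC c y a) := by
  have haS : a ∉ U \ S := fun h => ha (mem_sdiff.1 h).1
  rw [partitionTerm, insert_sdiff_of_notMem _ fun h => ha (hS h), fProd_insert_left haS,
    fProd_insert_right _ haS, partitionTerm]
  ring

theorem partitionTerm_insert_insert {a : ℂ} (ha : a ∉ U) {S : Finset ℂ} (hS : S ⊆ U) :
    partitionTerm c z (insert a U) V (insert a S) =
      -z * (partitionTerm c z U V S * ∏ y ∈ U \ S, fC c a y) := by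
  have haS : a ∉ S := fun h => ha (hS h)
  rw [partitionTerm, insert_sdiff_insert, sdiff_insert_of_notMem ha, fProd_insert_left haS,
    card_insert_of_notMem haS, partitionTerm]
  ring

theorem partitionTerm_insert_right {b : ℂ} (hb : b ∉ V) (S : Finset ℂ) :
    partitionTerm c z U (insert b V) S =
      partitionTerm c z U V S * ∏ x ∈ U \ S, fC c x b := by
  rw [partitionTerm, fProd_insert_right _ hb, partitionTerm]
  ring

theorem partitionTerm_mul_residueFactor_right {y : ℂ} (hy : y ∈ V) {S : Finset ℂ} (hS : S ⊆ U) :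
    partitionTerm c z U V S * residueFactor c S V y =
      residueFactor c U V y * partitionTerm c z U (V.erase y) S := by
  have hV := partitionTerm_insert_right (c := c) (z := z) (U := U) (notMem_erase y V) S
  rw [insert_erase hy] at hV
  rw [hV, residueFactor, residueFactor, ← prod_sdiff hS]
  ring

theorem partitionTerm_mul_residueFactor_left {x : ℂ} (hx : x ∈ U) {S : Finset ℂ}
    (hS : S ⊆ U.erase x) :
    partitionTerm c z U V S * residueFactor (-c) ∅ (U \ S) x =
      residueFactor (-c) V U x * partitionTerm c z (U.erase x) V S := by
  have hU := partitionTerm_insert_of_notMem (c := c) (z := z) (V := V) (notMem_erase x U) hS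
  rw [insert_erase hx] at hU
  simp only [hU, residueFactor, fC_neg, prod_empty, ← prod_sdiff hS, erase_sdiff_comm]
  ring

/-- The spurious poles at the points of `U` cancel in pairs: moving `x` between the two blocks
exchanges the two kinds of residues. -/
theorem partitionTerm_insert_mul_residueFactor {x : ℂ} (hx : x ∈ U) {S : Finset ℂ} (hxS : x ∉ S) :
    partitionTerm c z U V (insert x S) * residueFactor (-c) V (insert x S) x =
      -z * (partitionTerm c z U V S * residueFactor c ∅ (U \ S) x) := by
  have hxS' : x ∈ U \ S := mem_sdiff.2 ⟨hx, hxS⟩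
  obtain ⟨W, hxW, hW⟩ : ∃ W, x ∉ W ∧ U \ S = insert x W :=
    ⟨(U \ S).erase x, notMem_erase x _, (insert_erase hxS').symm⟩
  rw [partitionTerm, partitionTerm, sdiff_insert, hW, erase_insert hxW,
    card_insert_of_notMem hxS, fProd_insert_left hxS, fProd_insert_left hxW,
    fProd_insert_right _ hxW]
  simp only [residueFactor, fC_neg, erase_insert hxS, erase_insert hxW, prod_empty]
  ring

theorem sum_partitionTerm_insert (hUV : Disjoint U V) {a : ℂ} (haU : a ∉ U) (haV : a ∉ V) :
    ∑ S ∈ U.powerset, partitionTerm c z (insert a U) V S =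
      partitionSum c z U V +
        ∑ y ∈ V, c / (a - y) * (residueFactor c U V y * partitionSum c z U (V.erase y)) -
        ∑ S ∈ U.powerset, ∑ x ∈ S,
          c / (a - x) * (partitionTerm c z U V S * residueFactor (-c) V S x) := by
  have term (S : Finset ℂ) (hS : S ∈ U.powerset) :
      partitionTerm c z (insert a U) V S = partitionTerm c z U V S +
        ∑ y ∈ V, c / (a - y) * (residueFactor c U V y * partitionTerm c z U (V.erase y) S) -
        ∑ x ∈ S, c / (a - x) * (partitionTerm c z U V S * residueFactor (-c) V S x) := by
    rw [mem_powerset] at hS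
    rw [partitionTerm_insert_of_notMem haU hS,
      prod_fC_mul_prod_fC_eq_one_add_sum (hUV.mono_left hS) (fun h => haU (hS h)) haV,
      mul_sub, mul_add, mul_one, mul_sum, mul_sum]
    congr 1
    · congr 1
      refine sum_congr rfl fun y hy => ?_
      rw [← partitionTerm_mul_residueFactor_right hy hS, mul_left_comm]
    · exact sum_congr rfl fun x _ => mul_left_comm _ _ _
  simp only [sum_congr rfl term, sum_sub_distrib, sum_add_distrib, partitionSum, mul_sum]
  rw [sum_comm (s := V)]

theorem sum_partitionTerm_insert_insert {a : ℂ} (ha : a ∉ U) :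
    ∑ S ∈ U.powerset, partitionTerm c z (insert a U) V (insert a S) =
      -z * partitionSum c z U V +
        ∑ S ∈ U.powerset, ∑ x ∈ U \ S,
          c / (a - x) * (-z * (partitionTerm c z U V S * residueFactor c ∅ (U \ S) x)) := by
  rw [partitionSum, mul_sum, ← sum_add_distrib]
  refine sum_congr rfl fun S hS => ?_
  rw [partitionTerm_insert_insert ha (mem_powerset.1 hS),
    prod_fC_eq_one_add_sum fun h => ha (mem_sdiff.1 h).1, mul_add, mul_add, mul_one,
    mul_sum, mul_sum]
  congr! 2 with x
  ring

theorem partitionSum_insert_left (hUV : Disjoint U V) {a : ℂ} (haU : a ∉ U) (haV : a ∉ V) :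
    partitionSum c z (insert a U) V = (1 - z) * partitionSum c z U V +
      ∑ y ∈ V, c / (a - y) * (residueFactor c U V y * partitionSum c z U (V.erase y)) := by
  have cancel :
      ∑ S ∈ U.powerset, ∑ x ∈ S,
          c / (a - x) * (partitionTerm c z U V S * residueFactor (-c) V S x) =
        ∑ S ∈ U.powerset, ∑ x ∈ U \ S,
          c / (a - x) * (-z * (partitionTerm c z U V S * residueFactor c ∅ (U \ S) x)) := by
    rw [sum_powerset_sum_mem]
    refine sum_congr rfl fun S _ => sum_congr rfl fun x hx => ?_
    rw [partitionTerm_insert_mul_residueFactor (mem_sdiff.1 hx).1 (mem_sdiff.1 hx).2]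
  rw [partitionSum, sum_powerset_insert haU, sum_partitionTerm_insert hUV haU haV,
    sum_partitionTerm_insert_insert haU, cancel]
  ring

theorem partitionSum_insert_right {b : ℂ} (hbU : b ∉ U) (hbV : b ∉ V) :
    partitionSum c z U (insert b V) = partitionSum c z U V -
      ∑ x ∈ U, c / (b - x) * (residueFactor (-c) V U x * partitionSum c z (U.erase x) V) := by
  have term (S : Finset ℂ) :
      partitionTerm c z U (insert b V) S = partitionTerm c z U V S -
        ∑ x ∈ U \ S, c / (b - x) * (partitionTerm c z U V S * residueFactor (-c) ∅ (U \ S) x) := by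
    have poles := prod_fC_eq_one_add_sum (c := -c) fun h : b ∈ U \ S => hbU (mem_sdiff.1 h).1
    simp only [fC_neg] at poles
    rw [partitionTerm_insert_right hbV, poles, mul_add, mul_one, mul_sum, sub_eq_add_neg,
      ← sum_neg_distrib]
    congr! 2 with x
    ring
  simp only [partitionSum, term, sum_sub_distrib, mul_sum]
  rw [sum_powerset_sum_sdiff]
  refine congrArg _ (sum_congr rfl fun x hx => sum_congr rfl fun S hS => ?_)
  exact congrArg _ (partitionTerm_mul_residueFactor_left hx (mem_powerset.1 hS))

theorem partitionSum_empty_right (c z : ℂ) (U : Finset ℂ) :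
    partitionSum c z U ∅ = (1 - z) ^ #U := by
  induction U using Finset.induction_on with
  | empty => simp [partitionSum, partitionTerm, fProd]
  | insert a U ha ih =>
    rw [partitionSum_insert_left (disjoint_empty_right U) ha (notMem_empty a), sum_empty, add_zero,
      ih, card_insert_of_notMem ha, pow_succ']

theorem partitionSum_empty_left (c z : ℂ) (V : Finset ℂ) : partitionSum c z ∅ V = 1 := by
  simp [partitionSum, partitionTerm, fProd]

theorem one_sub_pow_card_mul_partitionSum (hUV : Disjoint U V) :
    (1 - z) ^ #V * partitionSum c z U V = (1 - z) ^ #U * partitionSum (-c) z V U := by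
  induction U using Finset.induction_on generalizing V with
  | empty => simp [partitionSum_empty_right, partitionSum_empty_left]
  | insert a U ha ih =>
    rw [disjoint_insert_left] at hUV
    have residues (y : ℂ) (hy : y ∈ V) :
        (1 - z) ^ #V * (c / (a - y) * (residueFactor c U V y * partitionSum c z U (V.erase y))) =
          -((1 - z) ^ (#U + 1) *
            (-c / (a - y) * (residueFactor c U V y * partitionSum (-c) z (V.erase y) U))) := by
      have ih_erase := ih (hUV.2.mono_right (erase_subset y V))
      rw [← card_erase_add_one hy]
      linear_combination (1 - z) * (c / (a - y)) * residueFactor c U V y * ih_erase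
    rw [partitionSum_insert_left hUV.2 ha hUV.1, partitionSum_insert_right hUV.1 ha,
      card_insert_of_notMem ha, neg_neg, mul_add, mul_sub, mul_sum, mul_sum,
      sum_congr rfl residues, sum_neg_distrib]
    linear_combination (1 - z) * ih hUV.2

end PartitionSums

section Expansion

open Finset

variable {ι κ : Type*} [Fintype ι] [Fintype κ] {c : ℂ} {x : ι → ℂ} {y : κ → ℂ}

theorem prod_erase_fC_mul_prod_erase_div [DecidableEq κ] (hy : Function.Injective y)
    (hyc : ∀ j k, y j - y k + c ≠ 0) {T : Finset κ} {j : κ} (hj : j ∈ T) :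
    (∏ k ∈ univ.erase j, fC c (y j) (y k)) *
        ∏ k ∈ T.erase j, (y j - y k) / (y j - y k + c) =
      ∏ k ∈ Tᶜ, fC c (y j) (y k) := by
  have cancel (k : κ) (hk : k ∈ T.erase j) :
      fC c (y j) (y k) * ((y j - y k) / (y j - y k + c)) = 1 :=
    div_mul_div_cancel₀ (sub_ne_zero.2 (hy.ne (ne_of_mem_erase hk).symm)) |>.trans
      (div_self (hyc j k))
  have split : univ.erase j = Tᶜ.disjUnion (T.erase j)
      (disjoint_compl_left.mono_right (erase_subset j T)) := by
    rw [disjUnion_eq_union, ← erase_eq_of_notMem (notMem_compl.2 hj), ← erase_union_distrib,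
      union_comm, union_compl]
  rw [split, prod_disjUnion, mul_assoc, ← prod_mul_distrib, prod_eq_one cancel, mul_one]

theorem KIz_eq_sum [DecidableEq κ] (z : ℂ) (x : ι → ℂ) (hy : Function.Injective y)
    (hyc : ∀ j k, y j - y k + c ≠ 0) :
    KIz c z x y = ∑ T : Finset κ, (-z) ^ #Tᶜ * (∏ j ∈ T, ∏ i, fC c (x i) (y j)) *
      ∏ j ∈ T, ∏ k ∈ Tᶜ, fC c (y j) (y k) := by
  let F (j : κ) : ℂ := (∏ i, fC c (x i) (y j)) * ∏ k ∈ univ.erase j, fC c (y j) (y k)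
  have det_eq : KIz c z x y =
      ((-z) • (1 : Matrix κ κ ℂ) + Matrix.of fun j k => F j * shiftedCauchy c y j k).det := by
    rw [KIz]
    congr 1
    ext j k
    simp only [Matrix.of_apply, Matrix.add_apply, Matrix.smul_apply, smul_eq_mul,
      Matrix.one_apply, F, shiftedCauchy, hC, div_div_eq_mul_div, mul_div_assoc]
  have minor (T : Finset κ) :
      ((Matrix.of fun j k => F j * shiftedCauchy c y j k).submatrix
        (Subtype.val : T → κ) Subtype.val).det =
        (∏ j ∈ T, ∏ i, fC c (x i) (y j)) * ∏ j ∈ T, ∏ k ∈ Tᶜ, fC c (y j) (y k) := by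
    refine (Matrix.det_mul_column (fun j : T => F j) (shiftedCauchy c fun j : T => y j)).trans ?_
    rw [det_shiftedCauchy y hyc, prod_coe_sort T F, ← prod_mul_distrib, ← prod_mul_distrib]
    refine prod_congr rfl fun j hj => ?_
    rw [← prod_erase_fC_mul_prod_erase_div hy hyc hj, ← mul_assoc]
  rw [det_eq, det_smul_one_add_eq_sum_minors]
  simp only [minor, mul_assoc]

theorem partitionSum_image_univ [DecidableEq ι] (hx : Function.Injective x)
    (hy : Function.Injective y) (c z : ℂ) :
    partitionSum c z (univ.image x) (univ.image y) =
      ∑ s : Finset ι, (-z) ^ #s * (∏ i ∈ sᶜ, ∏ j, fC c (x i) (y j)) *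
        ∏ i ∈ s, ∏ j ∈ sᶜ, fC c (x i) (x j) := by
  rw [partitionSum, powerset_image, sum_image (image_injective hx).injOn, powerset_univ]
  refine sum_congr rfl fun s _ => ?_
  rw [partitionTerm, ← image_sdiff _ _ hx, ← compl_eq_univ_sdiff, card_image_of_injective _ hx]
  simp only [fProd, prod_image hx.injOn, prod_image hy.injOn]

theorem KIz_eq_partitionSum [DecidableEq κ] (z : ℂ) (hx : Function.Injective x)
    (hy : Function.Injective y) (hyc : ∀ j k, y j - y k + c ≠ 0) :
    KIz c z x y = partitionSum (-c) z (univ.image y) (univ.image x) := by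
  rw [KIz_eq_sum z x hy hyc, partitionSum_image_univ hy hx,
    ← Equiv.sum_comp (compl_involutive (α := Finset κ)).toPerm]
  refine sum_congr rfl fun s _ => ?_
  simp only [Function.Involutive.coe_toPerm, compl_compl, fC_neg]
  rw [prod_comm (s := sᶜ) (t := s)]

theorem one_sub_pow_card_mul_KIz [DecidableEq ι] [DecidableEq κ] (z : ℂ)
    (hx : Function.Injective x) (hy : Function.Injective y) (hxy : ∀ i j, x i ≠ y j)
    (hyc : ∀ j k, y j - y k + c ≠ 0) :
    (1 - z) ^ Fintype.card ι * KIz c z x y =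
      (1 - z) ^ Fintype.card κ * ∑ s : Finset ι, (-z) ^ #s *
        (∏ i ∈ sᶜ, ∏ j, fC c (x i) (y j)) * ∏ i ∈ s, ∏ j ∈ sᶜ, fC c (x i) (x j) := by
  have hdisj : Disjoint (univ.image x) (univ.image y) := by
    simpa [disjoint_left] using fun i j => (hxy i j).symm
  have duality := one_sub_pow_card_mul_partitionSum (c := c) (z := z) hdisj
  rw [card_image_of_injective _ hx, card_image_of_injective _ hy, card_univ, card_univ] at duality
  rw [KIz_eq_partitionSum z hx hy hyc, ← partitionSum_image_univ hx hy, duality]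

end Expansion

section Genericity

variable {c : ℂ}

theorem Generic.injective {ι : Type*} {w : ι → ℂ} (h : Generic c w) : Function.Injective w :=
  fun i j hij => by_contra fun hne => (h i j hne).1 (sub_eq_zero.2 hij)

theorem Generic.neg {ι : Type*} {w : ι → ℂ} (h : Generic c w) : Generic (-c) w := fun i j hij => by
  obtain ⟨h0, hc, hnc, h2c, hn2c⟩ := h i j hij
  simpa [h0, hc, hnc] using And.intro (by simpa using hn2c) h2c

theorem Generic.sub_add_ne_zero {ι : Type*} {w : ι → ℂ} (h : Generic c w) (hc : c ≠ 0) (i j : ι) :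
    w i - w j + c ≠ 0 := by
  rcases eq_or_ne i j with rfl | hij
  · simpa using hc
  · exact fun h0 => (h i j hij).2.2.1 (eq_neg_of_add_eq_zero_left h0)

end Genericity

theorem one_sub_pow_mul_KIz_of_generic {c : ℂ} (hc : c ≠ 0) (z : ℂ) {n m : ℕ} {u : Fin n → ℂ}
    {v : Fin m → ℂ} (hgen : Generic c (Fin.append u v)) :
    (1 - z) ^ n * KIz c z u v = (1 - z) ^ m * ∑ s : Finset (Fin n),
      (-z) ^ s.card * (∏ i ∈ sᶜ, ∏ j, fC c (u i) (v j)) *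
        (∏ i ∈ s, ∏ j ∈ sᶜ, fC c (u i) (u j)) := by
  obtain ⟨hu, hv, huv⟩ := Fin.append_injective_iff.1 hgen.injective
  have hvc (j k : Fin m) : v j - v k + c ≠ 0 := by
    simpa using hgen.sub_add_ne_zero hc (Fin.natAdd n j) (Fin.natAdd n k)
  simpa using one_sub_pow_card_mul_KIz z hu hv huv hvc

/-- Partition expansion of the modified Izergin determinant over partitions of `ū`. -/
theorem stmt12
    (c : ℂ) (hc : c ≠ 0) (z : ℂ) (n m : ℕ)
    (u : Fin n → ℂ) (v : Fin m → ℂ)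
    (hgen : Generic c (Fin.append u v)) :
    (1 - z) ^ n * KIz c z u v
        = (1 - z) ^ m * ∑ s : Finset (Fin n),
            (-z) ^ s.card * (∏ i ∈ sᶜ, ∏ j, fC c (u i) (v j)) *
              (∏ i ∈ s, ∏ j ∈ sᶜ, fC c (u i) (u j)) ∧
      (1 - z) ^ n * KIzBar c z u v
        = (1 - z) ^ m * ∑ s : Finset (Fin n),
            (-z) ^ s.card * (∏ j, ∏ i ∈ sᶜ, fC c (v j) (u i)) *
              (∏ i ∈ sᶜ, ∏ j ∈ s, fC c (u i) (u j)) := by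
  refine ⟨one_sub_pow_mul_KIz_of_generic hc z hgen, ?_⟩
  rw [KIzBar, one_sub_pow_mul_KIz_of_generic (neg_ne_zero.2 hc) z hgen.neg]
  simp only [fC_neg]
  refine congrArg _ (Finset.sum_congr rfl fun s _ => ?_)
  rw [Finset.prod_comm (s := sᶜ) (t := Finset.univ), Finset.prod_comm (s := s) (t := sᶜ)]
end
end

section
/- For all z ∈ ℂ and generic tuples ū (length n), v̄ (length m), the conjugated and ordinary modified Izergin determinants are related by (1−z)^{n}·\bar{K}^{(z)}_{n,m}(ū | v̄) = (1−z)^{m}·K^{(z)}_{m,n}(v̄ | ū). -/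
open scoped BigOperators

noncomputable section

/-!
Let `U` and `V` be the monic polynomials with roots `u` and `v`. Up to similarity, the matrix behind
`K_{m,n}(v|u)` is the operator `T` on `ℂⁿ` that sends the values at the nodes `u` of a polynomial
`p` of degree `< n` to the values `V(u_j - c) / V(u_j) · p(u_j + c)`, so
`K_{m,n}(v|u) = det(T - z)`.

Let `m ≤ n`, and let `E` send `p` to its values at the points `v_i + c`. Then `E` is onto `ℂᵐ`, and
its kernel consists of the polynomials `V(X - c) q(X)` with `deg q < n - m`. On the kernel `T` acts
by `q(X) ↦ q(X + c)`, which is unipotent and contributes `(1 - z)^(n - m)`. On the quotient `ℂᵐ` it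
acts by a matrix which, up to transposition and similarity, is the one behind the conjugated
determinant of `(u|v)`. Indeed, if `p'` is the polynomial attached to the image under `T`, then
`V(X) p'(X) - V(X - c) p(X + c)` vanishes at the nodes `u`, hence equals `U s` with `deg s < m`;
evaluating at `v_i` gives the values of `s` in terms of `E p`, and evaluating at `v_i + c` gives
`E p'` in terms of the interpolant `s`. The case `n ≤ m` follows by exchanging `u` and `v` and
replacing `c` by `-c`.
-/

open Finset Lagrange Matrix Polynomial

section LinearAlgebra

variable {R : Type*} [CommRing R]

theorem det_eq_det_mul_det_of_exact {M₁ M M₂ : Type*} [AddCommGroup M₁] [AddCommGroup M]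
    [AddCommGroup M₂] [Module R M₁] [Module R M] [Module R M₂] [Module.Free R M₁]
    [Module.Finite R M₁] [Module.Finite R M] [Module.Free R M₂]
    {i : M₁ →ₗ[R] M} {p : M →ₗ[R] M₂} (hi : Function.Injective i) (hp : Function.Surjective p)
    (hip : Function.Exact i p) {f₁ : Module.End R M₁} {f : Module.End R M}
    {f₂ : Module.End R M₂} (h₁ : f ∘ₗ i = i ∘ₗ f₁) (h₂ : p ∘ₗ f = f₂ ∘ₗ p) :
    LinearMap.det f = LinearMap.det f₁ * LinearMap.det f₂ := by
  let e₁ : M₁ ≃ₗ[R] LinearMap.range i := .ofInjective i hi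
  let e₂ : (M ⧸ LinearMap.range i) ≃ₗ[R] M₂ := hip.linearEquivOfSurjective hp
  have := Module.Free.of_equiv e₁
  have := Module.Free.of_equiv e₂.symm
  have := Module.Finite.equiv e₁
  have hf : LinearMap.range i ≤ (LinearMap.range i).comap f := by
    rintro _ ⟨x, rfl⟩
    exact ⟨f₁ x, (LinearMap.congr_fun h₁ x).symm⟩
  have hsub : f.restrict hf = e₁.toLinearMap ∘ₗ f₁ ∘ₗ e₁.symm.toLinearMap := by
    rw [← LinearMap.comp_assoc, LinearEquiv.eq_comp_toLinearMap_symm]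
    ext x
    exact LinearMap.congr_fun h₁ x
  have hquot : f₂ = e₂.toLinearMap ∘ₗ (LinearMap.range i).mapQ _ f hf ∘ₗ e₂.symm.toLinearMap := by
    rw [← LinearMap.comp_assoc, LinearEquiv.eq_comp_toLinearMap_symm]
    ext x
    exact (LinearMap.congr_fun h₂ x).symm
  rw [LinearMap.det_eq_det_mul_det _ f hf, hsub, hquot, LinearMap.det_conj, LinearMap.det_conj]

variable {n : Type*} [Fintype n] [DecidableEq n]

theorem det_mul_sub_smul_one_comm (A B : Matrix n n R) (z : R) :
    (A * B - z • 1).det = (B * A - z • 1).det := by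
  have h := congrArg (eval z) (charpoly_mul_comm A B)
  rw [eval_charpoly, eval_charpoly] at h
  rw [← neg_sub, det_neg, ← neg_sub (z • 1) (B * A), det_neg]
  simpa [smul_one_eq_diagonal] using congrArg _ h

theorem det_diagonal_mul_mul_diagonal_sub_smul_one (a b : n → R) (M : Matrix n n R) (z : R) :
    (diagonal a * M * diagonal b - z • 1).det =
      (diagonal (fun j => b j * a j) * M - z • 1).det := by
  rw [det_mul_sub_smul_one_comm, ← Matrix.mul_assoc, diagonal_mul_diagonal]

theorem det_diagonal_mul_transpose_mul_diagonal_sub_smul_one (a b : n → R) (M : Matrix n n R)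
    (z : R) :
    (diagonal a * Mᵀ * diagonal b - z • 1).det =
      (diagonal (fun j => a j * b j) * M - z • 1).det := by
  rw [← det_diagonal_mul_mul_diagonal_sub_smul_one, ← det_transpose]
  simp [Matrix.mul_assoc]

theorem coe_taylorLinearEquiv (r : R) {n : ℕ} (q : degreeLT R n) :
    (taylorLinearEquiv r n q : R[X]) = taylor r q :=
  rfl

theorem det_taylorLinearEquiv_sub_smul_one (r z : R) (n : ℕ) :
    LinearMap.det ((taylorLinearEquiv r n : Module.End R (degreeLT R n)) - z • 1) =
      (1 - z) ^ n := by
  have entry (i j : Fin n) : LinearMap.toMatrix (degreeLT.basis R n) (degreeLT.basis R n)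
      ((taylorLinearEquiv r n : Module.End R (degreeLT R n)) - z • 1) i j =
        r ^ (j - i : ℕ) * ((j : ℕ).choose i : R) - if i = j then z else 0 := by
    have htaylor : (taylorLinearEquiv r n (degreeLT.basis R n j) : R[X]) = (X + C r) ^ (j : ℕ) := by
      rw [coe_taylorLinearEquiv, degreeLT.basis_val, taylor_X_pow]
    simp [LinearMap.toMatrix_apply, -taylorLinearEquiv_apply_coe, htaylor, coeff_X_add_C_pow,
      Finsupp.single_apply, eq_comm]
  rw [← LinearMap.det_toMatrix (degreeLT.basis R n), det_of_isUpperTriangular]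
  · simp [entry]
  · intro i j hji
    have hji : j < i := hji
    simp [entry, Nat.choose_eq_zero_of_lt, hji, hji.ne']

end LinearAlgebra

section Interpolation

variable {K κ : Type*} [Field K] [Fintype κ] {w : κ → K} {k : ℕ}

theorem nodal_univ_dvd_of_eval_eq_zero (hw : Function.Injective w) {p : K[X]}
    (hp : ∀ i, p.eval (w i) = 0) : nodal univ w ∣ p :=
  Fintype.prod_dvd_of_coprime (pairwise_coprime_X_sub_C hw) fun i => dvd_iff_isRoot.2 (hp i)

theorem exists_degreeLT_eq_nodal_mul (hw : Function.Injective w) {p : K[X]}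
    (hp : ∀ i, p.eval (w i) = 0) (hdeg : p.degree < (Fintype.card κ + k : ℕ)) :
    ∃ q ∈ degreeLT K k, p = nodal univ w * q := by
  obtain ⟨q, rfl⟩ := nodal_univ_dvd_of_eval_eq_zero hw hp
  refine ⟨q, mem_degreeLT.2 ?_, rfl⟩
  rw [degree_mul, degree_nodal, Nat.cast_add] at hdeg
  exact lt_of_add_lt_add_left hdeg

theorem degree_nodal_mul_lt (w : κ → K) {q : K[X]} (hq : q.degree < k) :
    (nodal univ w * q).degree < (Fintype.card κ + k : ℕ) := by
  rw [degree_mul, degree_nodal, Nat.cast_add]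
  exact WithBot.add_lt_add_left (by simp) hq

theorem eval_nodal_add_const {R : Type*} [CommRing R] (w : κ → R) (c x : R) :
    (nodal univ fun i => w i + c).eval x = (nodal univ w).eval (x - c) := by
  simp only [eval_nodal, sub_sub, add_comm c]

/-- The linear map sending a polynomial `q` of degree less than `k` to the values at the points `u`
of `q` times the monic polynomial with roots `w`. -/
def nodalMulEval {ι : Type*} (w : κ → K) (u : ι → K) (k : ℕ) : degreeLT K k →ₗ[K] ι → K :=
  LinearMap.pi fun j => leval (u j) ∘ₗ LinearMap.mulLeft K (nodal univ w) ∘ₗ (degreeLT K k).subtype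

theorem nodalMulEval_apply {ι : Type*} (w : κ → K) (u : ι → K) (q : degreeLT K k) (j : ι) :
    nodalMulEval w u k q j = (nodal univ w).eval (u j) * (q : K[X]).eval (u j) := by
  simp [nodalMulEval]

variable {ι : Type*} [Fintype ι] {u : ι → K}

theorem nodalMulEval_injective (hu : Function.Injective u)
    (hk : Fintype.card κ + k = Fintype.card ι) : Function.Injective (nodalMulEval w u k) := by
  refine LinearMap.ker_eq_bot.1 (LinearMap.ker_eq_bot'.2 fun q hq => ?_)
  have hzero : nodal univ w * (q : K[X]) = 0 :=
    eq_zero_of_degree_lt_of_eval_index_eq_zero _ hu.injOn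
      (by rw [card_univ, ← hk]; exact degree_nodal_mul_lt w (mem_degreeLT.1 q.2))
      fun j _ => by simpa [nodalMulEval_apply] using congrFun hq j
  exact Subtype.ext ((mul_eq_zero.1 hzero).resolve_left nodal_ne_zero)

variable [DecidableEq ι]

/-- The matrix that sends the values of a polynomial at the nodes `u` to its values at the points
`x`, for polynomials of degree less than the number of nodes. -/
def lagrangeMatrix {α : Type*} (u : ι → K) (x : α → K) : Matrix α ι K :=
  of fun i j => (Lagrange.basis univ u j).eval (x i)

theorem lagrangeMatrix_mulVec {α : Type*} (u : ι → K) (x : α → K) (g : ι → K) :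
    lagrangeMatrix u x *ᵥ g = fun i => (interpolate univ u g).eval (x i) := by
  ext i
  simp [lagrangeMatrix, mulVec, dotProduct, interpolate_apply, eval_finsetSum, mul_comm]

theorem interpolate_nodalMulEval (hu : Function.Injective u)
    (hk : Fintype.card κ + k = Fintype.card ι) (q : degreeLT K k) :
    interpolate univ u (nodalMulEval w u k q) = nodal univ w * (q : K[X]) := by
  refine (eq_interpolate_of_eval_eq _ hu.injOn ?_ fun j _ => ?_).symm
  · rw [card_univ, ← hk]
    exact degree_nodal_mul_lt w (mem_degreeLT.1 q.2)
  · rw [eval_mul, nodalMulEval_apply]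

theorem exact_nodalMulEval_lagrangeMatrix (hu : Function.Injective u) (hw : Function.Injective w)
    (hk : Fintype.card κ + k = Fintype.card ι) :
    Function.Exact (nodalMulEval w u k) (lagrangeMatrix u w).toLin' := by
  intro g
  rw [toLin'_apply, lagrangeMatrix_mulVec]
  constructor
  · intro hg
    obtain ⟨q, hq, hgq⟩ := exists_degreeLT_eq_nodal_mul hw (congrFun hg)
      (by rw [hk]; exact degree_interpolate_lt g hu.injOn)
    refine ⟨⟨q, hq⟩, funext fun j => ?_⟩
    rw [nodalMulEval_apply, ← eval_mul, ← hgq, eval_interpolate_at_node g hu.injOn (mem_univ j)]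
  · rintro ⟨q, rfl⟩
    ext i
    simp [interpolate_nodalMulEval hu hk, eval_nodal_at_node]

theorem lagrangeMatrix_toLin'_surjective (hu : Function.Injective u) (hw : Function.Injective w)
    (hcard : Fintype.card κ ≤ Fintype.card ι) :
    Function.Surjective (lagrangeMatrix u w).toLin' := by
  classical
  intro h
  have hdeg : (interpolate univ w h).degree < Fintype.card ι :=
    (degree_interpolate_lt h hw.injOn).trans_le (by exact_mod_cast hcard)
  refine ⟨fun j => (interpolate univ w h).eval (u j), ?_⟩
  rw [toLin'_apply, lagrangeMatrix_mulVec, ← eq_interpolate hu.injOn hdeg]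
  exact funext fun i => eval_interpolate_at_node h hw.injOn (mem_univ i)

end Interpolation

section ShiftTransfer

variable {K ι κ : Type*} [Field K] [Fintype ι] [Fintype κ]

/-- The Cauchy-like matrix `U(u_j + c) / (V(u_j) (u_j + c - u_k))`, where `U` and `V` are the monic
polynomials with roots `u` and `v`. Multiplied on the left by a diagonal matrix, it becomes the
matrix `M` with `K(v|u) = det(M - z)`. -/
def shiftKernel (c : K) (v : κ → K) (u : ι → K) : Matrix ι ι K :=
  of fun j k => (nodal univ u).eval (u j + c) / ((nodal univ v).eval (u j) * (u j + c - u k))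

variable [DecidableEq ι]

/-- The operator sending the values at the nodes `u` of a polynomial `p` of degree less than the
number of nodes to the values `V(u_j - c) / V(u_j) * p(u_j + c)`, where `V` is the monic polynomial
with roots `v`. The determinant of this operator minus `z` is the modified Izergin determinant of
`(v|u)`. -/
def shiftTransfer (c : K) (v : κ → K) (u : ι → K) : Matrix ι ι K :=
  diagonal (fun j => (nodal univ v).eval (u j - c) / (nodal univ v).eval (u j)) *
    lagrangeMatrix u fun j => u j + c

variable {c : K} {u : ι → K} {v : κ → K} {k : ℕ}

theorem shiftTransfer_eq_diagonal_mul_shiftKernel_mul (huc : ∀ i j, u i + c ≠ u j) :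
    shiftTransfer c v u = diagonal (fun j => (nodal univ v).eval (u j - c)) *
      shiftKernel c v u * diagonal (nodalWeight univ u) := by
  ext j l
  simp only [shiftTransfer, shiftKernel, lagrangeMatrix, diagonal_mul, mul_diagonal, of_apply,
    eval_basis_not_at_node (mem_univ l) (huc j l), div_eq_mul_inv, mul_inv]
  ring

theorem shiftTransfer_mulVec (c : K) (v : κ → K) (u g : ι → K) :
    shiftTransfer c v u *ᵥ g = fun j => (nodal univ v).eval (u j - c) / (nodal univ v).eval (u j) *
      (interpolate univ u g).eval (u j + c) := by
  ext j
  rw [shiftTransfer, ← mulVec_mulVec, mulVec_diagonal, lagrangeMatrix_mulVec]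

theorem shiftTransfer_mulVec_nodalMulEval (hu : Function.Injective u)
    (huv : ∀ i j, u i ≠ v j) (hk : Fintype.card κ + k = Fintype.card ι) (q : degreeLT K k) :
    shiftTransfer c v u *ᵥ nodalMulEval (fun i => v i + c) u k q =
      nodalMulEval (fun i => v i + c) u k (taylorLinearEquiv c k q) := by
  ext j
  have hne : (nodal univ v).eval (u j) ≠ 0 := eval_nodal_not_at_node fun i _ => huv j i
  simp only [shiftTransfer_mulVec, interpolate_nodalMulEval hu hk, nodalMulEval_apply,
    coe_taylorLinearEquiv, taylor_eval, eval_mul, eval_nodal_add_const, add_sub_cancel_right]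
  field_simp

theorem exists_nodal_mul_interpolate_shiftTransfer (hu : Function.Injective u)
    (huv : ∀ i j, u i ≠ v j) (g : ι → K) :
    ∃ s ∈ degreeLT K (Fintype.card κ),
      nodal univ v * interpolate univ u (shiftTransfer c v u *ᵥ g) -
        nodal univ (fun i => v i + c) * taylor c (interpolate univ u g) = nodal univ u * s := by
  refine exists_degreeLT_eq_nodal_mul hu (fun j => ?_) ?_
  · have hne : (nodal univ v).eval (u j) ≠ 0 := eval_nodal_not_at_node fun i _ => huv j i
    rw [eval_sub, eval_mul, eval_interpolate_at_node _ hu.injOn (mem_univ j), shiftTransfer_mulVec,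
      eval_mul, eval_nodal_add_const, taylor_eval]
    field_simp
    ring
  · rw [add_comm]
    refine (degree_sub_le _ _).trans_lt (max_lt ?_ ?_) <;> refine degree_nodal_mul_lt _ ?_
    · exact degree_interpolate_lt _ hu.injOn
    · rw [degree_taylor]
      exact degree_interpolate_lt _ hu.injOn

theorem eval_interpolate_shiftTransfer_add_const [DecidableEq κ] (hu : Function.Injective u)
    (hv : Function.Injective v) (hvc : ∀ i j, v i + c ≠ v j) (huv : ∀ i j, u i ≠ v j) (g : ι → K)
    (i : κ) :
    (interpolate univ u (shiftTransfer c v u *ᵥ g)).eval (v i + c) =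
      (nodal univ u).eval (v i + c) * ∑ j, nodalWeight univ v j * (v i + c - v j)⁻¹ *
        (-((nodal univ v).eval (v j - c) * (interpolate univ u g).eval (v j + c)) /
          (nodal univ u).eval (v j)) := by
  obtain ⟨s, hs, h⟩ := exists_nodal_mul_interpolate_shiftTransfer (c := c) hu huv g
  have hs_node (j : κ) : s.eval (v j) =
      -((nodal univ v).eval (v j - c) * (interpolate univ u g).eval (v j + c)) /
        (nodal univ u).eval (v j) := by
    have hne : (nodal univ u).eval (v j) ≠ 0 := eval_nodal_not_at_node fun l _ => (huv l j).symm
    have hj := congrArg (eval (v j)) h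
    rw [eval_sub, eval_mul, eval_nodal_at_node (mem_univ j), eval_mul, eval_nodal_add_const,
      taylor_eval, eval_mul] at hj
    rw [eq_div_iff hne]
    linear_combination -hj
  have hne : (nodal univ v).eval (v i + c) ≠ 0 := eval_nodal_not_at_node fun j _ => hvc i j
  have hi := congrArg (eval (v i + c)) h
  rw [eval_sub, eval_mul, eval_mul, eval_nodal_add_const, add_sub_cancel_right,
    eval_nodal_at_node (mem_univ i), zero_mul, sub_zero, eval_mul,
    eq_interpolate hv.injOn (mem_degreeLT.1 hs),
    eval_interpolate_not_at_node _ fun j _ => hvc i j, mul_left_comm] at hi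
  simpa only [hs_node] using mul_left_cancel₀ hne hi

variable [DecidableEq κ]

/-- The matrix through which `shiftTransfer c v u` acts on the values of polynomials at the points
`v_i + c`. The transposed kernel comes with the step `-c` and with the roles of `u` and `v`
exchanged, so the determinant of this matrix minus `z` is the conjugated modified Izergin
determinant of `(u|v)`. -/
def dualShiftTransfer (c : K) (v : κ → K) (u : ι → K) : Matrix κ κ K :=
  diagonal (fun i => (nodal univ u).eval (v i + c)) * (shiftKernel (-c) u v)ᵀ *
    diagonal (nodalWeight univ v)

theorem lagrangeMatrix_mul_shiftTransfer (hu : Function.Injective u) (hv : Function.Injective v)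
    (hvc : ∀ i j, v i + c ≠ v j) (huv : ∀ i j, u i ≠ v j) :
    lagrangeMatrix u (fun i => v i + c) * shiftTransfer c v u =
      dualShiftTransfer c v u * lagrangeMatrix u (fun i => v i + c) := by
  refine toLin'.injective (LinearMap.ext fun g => funext fun i => ?_)
  rw [toLin'_apply, toLin'_apply, ← mulVec_mulVec, ← mulVec_mulVec, lagrangeMatrix_mulVec,
    lagrangeMatrix_mulVec]
  refine (eval_interpolate_shiftTransfer_add_const hu hv hvc huv g i).trans ?_
  simp only [dualShiftTransfer, mulVec, dotProduct, mul_diagonal, diagonal_mul, transpose_apply,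
    shiftKernel, of_apply, mul_sum]
  refine sum_congr rfl fun j _ => ?_
  have hinv : (v j - c - v i)⁻¹ = -(v i + c - v j)⁻¹ := by
    rw [← inv_neg]
    congr 1
    ring
  simp only [← sub_eq_add_neg, div_eq_mul_inv, mul_inv, hinv]
  ring

theorem det_shiftTransfer_sub_smul_one (hu : Function.Injective u) (hv : Function.Injective v)
    (hvc : ∀ i j, v i + c ≠ v j) (huv : ∀ i j, u i ≠ v j)
    (hk : Fintype.card κ + k = Fintype.card ι) (z : K) :
    (shiftTransfer c v u - z • 1).det = (1 - z) ^ k * (dualShiftTransfer c v u - z • 1).det := by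
  rw [← LinearMap.det_toLin', ← LinearMap.det_toLin', ← det_taylorLinearEquiv_sub_smul_one c]
  have hw : Function.Injective fun i => v i + c := (add_left_injective c).comp hv
  refine det_eq_det_mul_det_of_exact (nodalMulEval_injective hu hk)
    (lagrangeMatrix_toLin'_surjective hu hw (by omega))
    (exact_nodalMulEval_lagrangeMatrix hu hw hk) ?_ ?_
  · refine LinearMap.ext fun q => ?_
    simp [shiftTransfer_mulVec_nodalMulEval hu huv hk]
  · rw [← toLin'_mul, ← toLin'_mul, Matrix.mul_sub, Matrix.sub_mul,
      lagrangeMatrix_mul_shiftTransfer hu hv hvc huv]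
    simp

end ShiftTransfer

section Izergin

variable {ι κ : Type*} [Fintype ι] [Fintype κ]

theorem prod_fC_eq_eval_nodal_div (c : ℂ) (x : ι → ℂ) (y : ℂ) :
    ∏ i, fC c (x i) y = (nodal univ x).eval (y - c) / (nodal univ x).eval y := by
  rw [eval_nodal, eval_nodal, ← prod_div_distrib]
  refine prod_congr rfl fun i _ => ?_
  rw [fC, ← neg_div_neg_eq]
  congr 1 <;> ring

variable [DecidableEq κ]

theorem prod_erase_fC_eq_nodalWeight_mul (c : ℂ) (y : κ → ℂ) (j : κ) :
    ∏ i ∈ univ.erase j, fC c (y j) (y i) =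
      nodalWeight univ y j * ∏ i ∈ univ.erase j, (y j + c - y i) := by
  rw [nodalWeight, ← prod_mul_distrib]
  refine prod_congr rfl fun i _ => ?_
  rw [fC, div_eq_inv_mul, add_sub_right_comm]

theorem KIz_eq_det_shiftKernel (c z : ℂ) (x : ι → ℂ) (y : κ → ℂ) :
    KIz c z x y = (diagonal (fun j => nodalWeight univ y j * (nodal univ x).eval (y j - c)) *
      shiftKernel c x y - z • 1).det := by
  rw [KIz]
  congr 1
  ext j k
  have hnodal : (nodal univ y).eval (y j + c) = c * ∏ i ∈ univ.erase j, (y j + c - y i) := by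
    rw [eval_nodal, ← mul_prod_erase _ _ (mem_univ j), add_sub_cancel_left]
  have hdiff : y j - y k + c = y j + c - y k := by ring
  simp only [prod_fC_eq_eval_nodal_div, prod_erase_fC_eq_nodalWeight_mul, hC, of_apply,
    Matrix.sub_apply, Matrix.smul_apply, diagonal_mul, shiftKernel, hnodal, one_apply, smul_eq_mul,
    hdiff, div_eq_mul_inv, mul_inv, inv_inv]
  ring

theorem KIz_eq_det_shiftTransfer {c : ℂ} {y : κ → ℂ} (hy : ∀ i j, y i + c ≠ y j) (z : ℂ)
    (x : ι → ℂ) : KIz c z x y = (shiftTransfer c x y - z • 1).det := by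
  rw [KIz_eq_det_shiftKernel, shiftTransfer_eq_diagonal_mul_shiftKernel_mul hy,
    det_diagonal_mul_mul_diagonal_sub_smul_one]

theorem KIzBar_eq_det_dualShiftTransfer (c z : ℂ) (x : ι → ℂ) (y : κ → ℂ) :
    KIzBar c z x y = (dualShiftTransfer c y x - z • 1).det := by
  rw [KIzBar, KIz_eq_det_shiftKernel, dualShiftTransfer,
    det_diagonal_mul_transpose_mul_diagonal_sub_smul_one]
  simp only [sub_neg_eq_add, mul_comm]

variable [DecidableEq ι]

theorem one_sub_pow_mul_KIzBar_of_card_le {c : ℂ} {u : ι → ℂ} {v : κ → ℂ}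
    (hu : Function.Injective u) (hv : Function.Injective v) (huc : ∀ i j, u i + c ≠ u j)
    (hvc : ∀ i j, v i + c ≠ v j) (huv : ∀ i j, u i ≠ v j)
    (hcard : Fintype.card κ ≤ Fintype.card ι) (z : ℂ) :
    (1 - z) ^ Fintype.card ι * KIzBar c z u v = (1 - z) ^ Fintype.card κ * KIz c z v u := by
  obtain ⟨k, hk⟩ := Nat.exists_eq_add_of_le hcard
  rw [KIz_eq_det_shiftTransfer huc, KIzBar_eq_det_dualShiftTransfer,
    det_shiftTransfer_sub_smul_one hu hv hvc huv hk.symm, hk, pow_add, mul_assoc]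

theorem add_neg_ne_of_add_ne {G α : Type*} [AddGroup G] {c : G} {w : α → G}
    (hw : ∀ i j, w i + c ≠ w j) (i j : α) : w i + -c ≠ w j :=
  fun h => hw j i (by rw [← h, neg_add_cancel_right])

theorem stmt13_general {c : ℂ} {u : ι → ℂ} {v : κ → ℂ} (hu : Function.Injective u)
    (hv : Function.Injective v) (huc : ∀ i j, u i + c ≠ u j) (hvc : ∀ i j, v i + c ≠ v j)
    (huv : ∀ i j, u i ≠ v j) (z : ℂ) :
    (1 - z) ^ Fintype.card ι * KIzBar c z u v = (1 - z) ^ Fintype.card κ * KIz c z v u := by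
  rcases le_total (Fintype.card κ) (Fintype.card ι) with hcard | hcard
  · exact one_sub_pow_mul_KIzBar_of_card_le hu hv huc hvc huv hcard z
  · have := one_sub_pow_mul_KIzBar_of_card_le hv hu (add_neg_ne_of_add_ne hvc)
      (add_neg_ne_of_add_ne huc) (fun i j => (huv j i).symm) hcard z
    rw [KIzBar, neg_neg] at this
    exact this.symm

end Izergin

namespace Generic

variable {c : ℂ} {ι : Type*} {w : ι → ℂ}

theorem comp {κ : Type*} (hw : Generic c w) {f : κ → ι} (hf : Function.Injective f) :
    Generic c (w ∘ f) :=
  fun i j hij => hw (f i) (f j) (hf.ne hij)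

theorem injective_s13 (hw : Generic c w) : Function.Injective w :=
  fun i j h => by_contra fun hij => (hw i j hij).1 (sub_eq_zero.2 h)

theorem add_ne (hc : c ≠ 0) (hw : Generic c w) (i j : ι) : w i + c ≠ w j := by
  intro h
  rcases eq_or_ne i j with rfl | hij
  · exact hc (left_eq_add.1 h.symm)
  · exact (hw i j hij).2.2.1 (by linear_combination h)

end Generic

/-- Relation between the conjugated and the ordinary modified Izergin determinants. -/
theorem stmt13
    (c : ℂ) (hc : c ≠ 0) (z : ℂ) (n m : ℕ)
    (u : Fin n → ℂ) (v : Fin m → ℂ)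
    (hgen : Generic c (Fin.append u v)) :
    (1 - z) ^ n * KIzBar c z u v = (1 - z) ^ m * KIz c z v u := by
  have hu : Generic c u := by simpa [Function.comp_def] using hgen.comp (Fin.castAdd_injective n m)
  have hv : Generic c v := by simpa [Function.comp_def] using hgen.comp (Fin.natAdd_injective m n)
  have huv := (Fin.append_injective_iff.1 hgen.injective_s13).2.2
  simpa using stmt13_general hu.injective_s13 hv.injective_s13 (hu.add_ne hc) (hv.add_ne hc) huv z
end
end

section
/- Let w_1, …, w_p (p ≥ 1) be complex numbers that are pairwise distinct with w_j − w_k ∉ {c, −c} for all j ≠ k, and let u = w_{j_0} for some index j_0. Then Σ_{k=1}^{p} ( ∏_{j ≠ k} f(w_j, w_k) ) / h(u, w_k) = 1. -/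
open scoped BigOperators

noncomputable section

/-!
Both `∏ (X - v j)` and `∏ (X - y j)` are monic of degree `n`, so their difference has degree less
than `n` and is determined by its values at the nodes `v k`. Evaluating its Lagrange interpolant at
`x` and dividing by `∏ (x - v j)` gives the partial fraction expansion of
`1 - ∏ (x - y j) / (x - v j)`. For `v = w`, `y = w + c` and `x = u + c` its terms are those of the
sum over `k`, and the product becomes `∏ (u - w j) / (u - w j + c)`, which vanishes as soon as `u`
is one of the `w j`.
-/

section PartialFractions

open Finset Polynomial Lagrange

theorem sub_add_ne_zero_of_sub_ne_neg {G ι : Type*} [AddGroup G] {c : G} {w : ι → G} (hc : c ≠ 0)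
    (hw : ∀ j k, j ≠ k → w j - w k ≠ -c) (j k : ι) : w j - w k + c ≠ 0 := by
  obtain rfl | hjk := eq_or_ne j k
  · rwa [sub_self, zero_add]
  · exact fun h => hw j k hjk (eq_neg_of_add_eq_zero_left h)

theorem degree_nodal_sub_nodal_lt {R ι : Type*} [CommRing R] [Nontrivial R]
    (s : Finset ι) (v y : ι → R) : (nodal s v - nodal s y).degree < #s := by
  calc (nodal s v - nodal s y).degree < (nodal s v).degree :=
        degree_sub_lt_left (by simp only [degree_nodal]) nodal_ne_zero
          (by rw [nodal_monic.leadingCoeff, nodal_monic.leadingCoeff])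
    _ = #s := degree_nodal

variable {K ι : Type*} [Field K] [DecidableEq ι] {s : Finset ι} {v : ι → K} {x : K}

theorem eval_div_eval_nodal_eq_sum {P : K[X]} (hv : Set.InjOn v s) (hP : P.degree < #s)
    (hx : ∀ k ∈ s, x ≠ v k) :
    P.eval x / (nodal s v).eval x =
      ∑ k ∈ s, P.eval (v k) / (∏ j ∈ s.erase k, (v k - v j)) / (x - v k) := by
  rw [div_eq_iff (eval_nodal_not_at_node hx), mul_comm]
  conv_lhs => rw [eq_interpolate hv hP, eval_interpolate_not_at_node _ hx]
  congr 1
  refine sum_congr rfl fun k _ => ?_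
  rw [nodalWeight, prod_inv_distrib]
  ring

theorem one_sub_prod_sub_div_sub_eq_sum (y : ι → K) (hv : Set.InjOn v s)
    (hx : ∀ k ∈ s, x ≠ v k) :
    1 - ∏ j ∈ s, (x - y j) / (x - v j) =
      ∑ k ∈ s, (∏ j ∈ s.erase k, (v k - y j) / (v k - v j)) * ((y k - v k) / (x - v k)) := by
  have hnodal : (nodal s v).eval x ≠ 0 := eval_nodal_not_at_node hx
  have residue : ∀ k ∈ s, (nodal s v - nodal s y).eval (v k) =
      (∏ j ∈ s.erase k, (v k - y j)) * (y k - v k) := fun k hk => by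
    rw [eval_sub, eval_nodal_at_node hk, eval_nodal, ← prod_erase_mul s _ hk]
    ring
  calc 1 - ∏ j ∈ s, (x - y j) / (x - v j)
      = (nodal s v - nodal s y).eval x / (nodal s v).eval x := by
        rw [eval_sub, sub_div, div_self hnodal, eval_nodal, eval_nodal, prod_div_distrib]
    _ = ∑ k ∈ s, (nodal s v - nodal s y).eval (v k) /
          (∏ j ∈ s.erase k, (v k - v j)) / (x - v k) :=
        eval_div_eval_nodal_eq_sum hv (degree_nodal_sub_nodal_lt s v y) hx
    _ = _ := sum_congr rfl fun k hk => by
        rw [residue k hk, prod_div_distrib]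
        ring

theorem stmt19_general {c u : K} {w : ι → K} (hw : Set.InjOn w s)
    (hu : ∀ k ∈ s, u - w k + c ≠ 0) :
    ∑ k ∈ s, (∏ j ∈ s.erase k, (w j - w k + c) / (w j - w k)) * (c / (u - w k + c)) =
      1 - ∏ k ∈ s, (u - w k) / (u - w k + c) := by
  have hx : ∀ k ∈ s, u + c ≠ w k := fun k hk h => hu k hk (by rw [← h]; ring)
  have reflect : ∀ j k, (w k - (w j + c)) / (w k - w j) = (w j - w k + c) / (w j - w k) :=
    fun j k => by rw [← neg_div_neg_eq]; ring_nf
  have shift : ∀ k, u + c - w k = u - w k + c := fun k => add_sub_right_comm u c (w k)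
  simpa only [reflect, shift, add_sub_add_right_eq_sub, add_sub_cancel_left]
    using (one_sub_prod_sub_div_sub_eq_sum (fun j => w j + c) hw hx).symm

end PartialFractions

/-- The summation identity `Σ_k (∏_{j≠k} f(w_j,w_k)) / h(u,w_k) = 1` whenever
`u` is one of the parameters `w_j`. -/
theorem stmt19
    (c : ℂ) (hc : c ≠ 0) (p : ℕ) (w : Fin p → ℂ) (j0 : Fin p)
    (hw : ∀ j k, j ≠ k → w j ≠ w k ∧ w j - w k ≠ c ∧ w j - w k ≠ -c) :
    ∑ k : Fin p, (∏ j ∈ Finset.univ.erase k, fC c (w j) (w k)) / hC c (w j0) (w k) = 1 := by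
  have hu := sub_add_ne_zero_of_sub_ne_neg hc (fun j k hjk => (hw j k hjk).2.2) j0
  have hinj : Function.Injective w := fun j k => not_imp_not.1 fun hjk => (hw j k hjk).1
  simpa only [fC, hC, div_div_eq_mul_div, mul_div_assoc, Finset.prod_eq_zero (Finset.mem_univ j0),
    sub_self, zero_div, sub_zero] using stmt19_general (s := .univ) hinj.injOn fun k _ => hu k
end
end
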